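/- Lozanovskii factorization for Hardy spaces / product theorem: Let X, Y be rearrangement-invariant Banach function spaces over 𝕋 with X⊙Y ⊂ L^1. Then H[X]⊙H[Y] = H[X⊙Y] with equality of (quasi-)norms, where the product of the Hardy spaces is {fg : f ∈ H[X], g ∈ H[Y]} with ‖h‖ = inf{‖f‖_{H[X]}‖g‖_{H[Y]} : h = fg}. -/

import Mathlib

open MeasureTheory Filter Topology ComplexConjugate
open scoped ENNReal

noncomputable section

instance fact_two_pi_pos : Fact (0 < 2 * Real.pi) := ⟨by positivity⟩

/-- The unit circle, modelled additively as `ℝ / 2πℤ`. -/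
abbrev 𝕋 := AddCircle (2 * Real.pi)

/-- Normalized Lebesgue (Haar) measure on the circle. -/
def μ : Measure 𝕋 := AddCircle.haarAddCircle

/-- A (quasi-)norm functional on measurable functions on the circle, with values in `ℝ≥0∞`. -/
abbrev NormFn := (𝕋 → ℂ) → ℝ≥0∞

/-- Membership in the function space determined by the norm functional `N`. -/
def MemN (N : NormFn) (f : 𝕋 → ℂ) : Prop :=
  AEStronglyMeasurable f μ ∧ N f < ⊤

/-- The closed unit ball of the space determined by `N`. -/
def unitBall (N : NormFn) : Set (𝕋 → ℂ) :=
  {f | AEStronglyMeasurable f μ ∧ N f ≤ 1}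

/-- The Köthe dual (associate space) norm of `N`. -/
def kdualN (N : NormFn) : NormFn := fun g =>
  ⨆ f : unitBall N, ∫⁻ t, (‖f.1 t * g t‖₊ : ℝ≥0∞) ∂μ

/-- The norm of the space `M(X,Y)` of pointwise multipliers, i.e. the operator norm of
multiplication by `a` from the space of `NX` to the space of `NY`. -/
def multN (NX NY : NormFn) : NormFn := fun a =>
  ⨆ f : unitBall NX, NY (fun t => a t * f.1 t)

/-- The norm of the pointwise product space `X ⊙ Y`. -/
def prodN (NX NY : NormFn) : NormFn := fun h =>
  ⨅ p : {p : (𝕋 → ℂ) × (𝕋 → ℂ) //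
      AEStronglyMeasurable p.1 μ ∧ AEStronglyMeasurable p.2 μ ∧
      h =ᵐ[μ] fun t => p.1 t * p.2 t},
    NX p.1.1 * NY p.1.2

/-- Membership in the Hardy space `H[X]`: membership in `X` together with the vanishing of all
negative Fourier coefficients. -/
def HardyMemN (N : NormFn) (f : 𝕋 → ℂ) : Prop :=
  AEStronglyMeasurable f μ ∧ N f < ⊤ ∧ ∀ n : ℤ, n < 0 → fourierCoeff f n = 0

/-- Operator norm of `T` from the space of `N1` to that of `N2`. -/
def opN (N1 N2 : NormFn) (T : (𝕋 → ℂ) → (𝕋 → ℂ)) : ℝ≥0∞ :=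
  ⨆ f : unitBall N1, N2 (T f.1)

/-- Operator norm of `T` restricted to the Hardy space of `N1`, measured in `N2`. -/
def hardyOpN (N1 N2 : NormFn) (T : (𝕋 → ℂ) → (𝕋 → ℂ)) : ℝ≥0∞ :=
  ⨆ f : {f : 𝕋 → ℂ // HardyMemN N1 f ∧ N1 f ≤ 1}, N2 (T f.1)

/-- `P` is (a realization of) the Riesz projection: it respects a.e. equality and, on integrable
functions, keeps the Fourier coefficients with nonnegative index and kills the others. -/
def IsRieszProj (P : (𝕋 → ℂ) → (𝕋 → ℂ)) : Prop :=
  (∀ f g, f =ᵐ[μ] g → P f =ᵐ[μ] P g) ∧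
  (∀ f g, P (f + g) =ᵐ[μ] P f + P g) ∧
  (∀ (c : ℂ) f, P (fun t => c * f t) =ᵐ[μ] fun t => c * P f t) ∧
  (∀ f, Integrable f μ → Integrable (P f) μ ∧
    ∀ n : ℤ, fourierCoeff (P f) n = if 0 ≤ n then fourierCoeff f n else 0)

/-- The flip operator `(Jf)(t) = t⁻¹ f(t⁻¹)`, written additively on `ℝ/2πℤ`. -/
def Jflip (f : 𝕋 → ℂ) : 𝕋 → ℂ := fun x => fourier (-1) x * f (-x)

/-- The dilation operator `D_s`: `(D_s f)(e^{iθ}) = f(e^{iθs})` for `θs ∈ [0,2π)`, `0` otherwise. -/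
def dilOp (s : ℝ) (f : 𝕋 → ℂ) : 𝕋 → ℂ := fun x =>
  let θ : ℝ := (AddCircle.equivIco (2 * Real.pi) 0 x : ℝ)
  if 0 ≤ s * θ ∧ s * θ < 2 * Real.pi then f ((s * θ : ℝ) : 𝕋) else 0

/-- Operator norm of the dilation `D_s` on the space of `N`. -/
def dilNorm (N : NormFn) (s : ℝ) : ℝ≥0∞ :=
  ⨆ f : unitBall N, N (dilOp s f.1)

/-- `α` is the lower Boyd index of the space of `N`. -/
def boydLower (N : NormFn) (α : ℝ) : Prop :=
  Tendsto (fun s : ℝ => Real.log (dilNorm N (1 / s)).toReal / Real.log s) (𝓝[>] 0) (𝓝 α)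

/-- `β` is the upper Boyd index of the space of `N`. -/
def boydUpper (N : NormFn) (β : ℝ) : Prop :=
  Tendsto (fun s : ℝ => Real.log (dilNorm N (1 / s)).toReal / Real.log s) atTop (𝓝 β)

/-- The space of `N` has nontrivial Boyd indices. -/
def NontrivialBoyd (N : NormFn) : Prop :=
  ∃ α β : ℝ, 0 < α ∧ β < 1 ∧ boydLower N α ∧ boydUpper N β

/-- Trigonometric polynomials. -/
def IsTrigPoly (f : 𝕋 → ℂ) : Prop :=
  ∃ (n : ℕ) (c : ℤ → ℂ), f = fun x => ∑ k ∈ Finset.Icc (-(n : ℤ)) n, c k * fourier k x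

/-- Analytic trigonometric polynomials. -/
def IsAnalyticPoly (f : 𝕋 → ℂ) : Prop :=
  ∃ (n : ℕ) (c : ℕ → ℂ), f = fun x => ∑ k ∈ Finset.range (n + 1), c k * fourier (k : ℤ) x

/-- The Fejér kernel `K_n`. -/
def fejer (n : ℕ) : 𝕋 → ℂ := fun x =>
  ∑ k ∈ Finset.Icc (-(n : ℤ)) n, (1 - (|(k : ℝ)| / (n + 1)) : ℂ) * fourier k x

/-- Convolution with the Fejér kernel, `f * K_n`. -/
def convFejer (n : ℕ) (f : 𝕋 → ℂ) : 𝕋 → ℂ := fun x =>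
  ∫ y, f y * fejer n (x - y) ∂μ

/-- The Banach envelope norm of `N`. -/
def envN (N : NormFn) : NormFn := fun f =>
  ⨅ d : {d : Σ n : ℕ, Fin n → 𝕋 → ℂ // f =ᵐ[μ] fun t => ∑ i, d.2 i t},
    ∑ i, N (d.1.2 i)

/-- The Banach envelope norm of the Hardy space `H[Z]` (decompositions within `H[Z]`). -/
def envHardyN (N : NormFn) : NormFn := fun f =>
  ⨅ d : {d : Σ n : ℕ, Fin n → 𝕋 → ℂ //
      (∀ i, HardyMemN N (d.2 i)) ∧ f =ᵐ[μ] fun t => ∑ i, d.2 i t},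
    ∑ i, N (d.1.2 i)

/-- The norm of the 1/2-concavification `Z^{(1/2)}`: `‖f‖ = ‖|f|^{1/2}‖²`. -/
def concavHalf (N : NormFn) : NormFn := fun f =>
  (N (fun t => (Real.sqrt ‖f t‖ : ℂ))) ^ 2

/-- `dist_{M(X,Y)}(a, conj H[M(X,Y)])`: the infimum of multiplier norms of symbols `b` whose
Fourier coefficients agree with those of `a` for positive indices. -/
def hankelDist (NX NY : NormFn) (a : 𝕋 → ℂ) : ℝ≥0∞ :=
  ⨅ b : {b : 𝕋 → ℂ // AEStronglyMeasurable b μ ∧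
      ∀ k : ℤ, 0 < k → fourierCoeff b k = fourierCoeff a k},
    multN NX NY b.1

/-- The Kuratowski measure of noncompactness of the set `A`, with diameters measured by `N`. -/
def setMNC (N : NormFn) (A : Set (𝕋 → ℂ)) : ℝ≥0∞ :=
  ⨅ d : {d : ℝ≥0∞ // ∃ (n : ℕ) (B : Fin n → Set (𝕋 → ℂ)),
      (∀ f ∈ A, ∃ i, f ∈ B i) ∧
      ∀ i, ∀ f ∈ B i, ∀ g ∈ B i, N (fun t => f t - g t) ≤ d}, d.1

/-- The decreasing rearrangement `f*` of `f`. -/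
def decRearr (f : 𝕋 → ℂ) (s : ℝ) : ℝ≥0∞ :=
  sInf {l : ℝ≥0∞ | μ {t | l < (‖f t‖₊ : ℝ≥0∞)} ≤ ENNReal.ofReal s}

/-- The Lorentz norm `‖f‖_{L^{p,q}}` on the circle (total measure 1). -/
def lorentzN (p q : ℝ≥0∞) : NormFn := fun f =>
  if q = ⊤ then ⨆ s : Set.Ioo (0 : ℝ) 1, decRearr f s.1 * ENNReal.ofReal (s.1 ^ (1 / p).toReal)
  else (∫⁻ s in Set.Ioo (0 : ℝ) 1,
      (decRearr f s * ENNReal.ofReal (s ^ (1 / p).toReal)) ^ q.toReal / ENNReal.ofReal s)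
    ^ (1 / q).toReal

/-- `dist_{L^{p,q}}(a, conj H^{p,q})` expressed via matching of positive Fourier coefficients. -/
def lorDist (p q : ℝ≥0∞) (a : 𝕋 → ℂ) : ℝ≥0∞ :=
  ⨅ b : {b : 𝕋 → ℂ // AEStronglyMeasurable b μ ∧
      ∀ k : ℤ, 0 < k → fourierCoeff b k = fourierCoeff a k},
    lorentzN p q b.1

/-- The analytic polynomial with coefficients `c 0, …, c n`. -/
def aPoly (n : ℕ) (c : ℕ → ℂ) : 𝕋 → ℂ := fun x =>
  ∑ k ∈ Finset.range (n + 1), c k * fourier (k : ℤ) x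

/-- The polynomial `p^c(t) = conj (p(1/t))`, i.e. with conjugated coefficients. -/
def aPolyC (n : ℕ) (c : ℕ → ℂ) : 𝕋 → ℂ := aPoly n fun k => (starRingEnd ℂ) (c k)

/-- A Banach function space over the circle, encoded by its norm functional. -/
structure BFS where
  N : NormFn
  ae_congr : ∀ f g, f =ᵐ[μ] g → N f = N g
  add_le : ∀ f g, N (f + g) ≤ N f + N g
  smul_eq : ∀ (c : ℂ) (f), N (fun t => c * f t) = (‖c‖₊ : ℝ≥0∞) * N f
  ideal : ∀ f g, AEStronglyMeasurable g μ → (∀ᵐ t ∂μ, ‖g t‖ ≤ ‖f t‖) → N g ≤ N f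
  const_finite : N (fun _ => 1) < ⊤
  norm_eq_zero : ∀ f, AEStronglyMeasurable f μ → N f = 0 → f =ᵐ[μ] fun _ => 0
  semiFatou : ∀ (f : ℕ → 𝕋 → ℂ) (g : 𝕋 → ℂ),
    (∀ n, AEStronglyMeasurable (f n) μ) → AEStronglyMeasurable g μ →
    (∀ᵐ t ∂μ, Monotone (fun n => ‖f n t‖) ∧
      Tendsto (fun n => ‖f n t‖) atTop (𝓝 ‖g t‖)) →
    N g < ⊤ → N g = ⨆ n, N (f n)
  complete : ∀ f : ℕ → 𝕋 → ℂ, (∀ n, AEStronglyMeasurable (f n) μ) →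
    (∑' n, N (f n)) < ⊤ →
    ∃ g, AEStronglyMeasurable g μ ∧ N g < ⊤ ∧
      Tendsto (fun n => N (fun t => g t - ∑ k ∈ Finset.range n, f k t)) atTop (𝓝 0)

/-- A quasi-Banach function space over the circle, with quasi-triangle constant `kappa`. -/
structure QBFS where
  N : NormFn
  kappa : ℝ≥0∞
  one_le_kappa : 1 ≤ kappa
  kappa_finite : kappa < ⊤
  ae_congr : ∀ f g, f =ᵐ[μ] g → N f = N g
  add_le : ∀ f g, N (f + g) ≤ kappa * (N f + N g)
  smul_eq : ∀ (c : ℂ) (f), N (fun t => c * f t) = (‖c‖₊ : ℝ≥0∞) * N f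
  ideal : ∀ f g, AEStronglyMeasurable g μ → (∀ᵐ t ∂μ, ‖g t‖ ≤ ‖f t‖) → N g ≤ N f
  const_finite : N (fun _ => 1) < ⊤
  norm_eq_zero : ∀ f, AEStronglyMeasurable f μ → N f = 0 → f =ᵐ[μ] fun _ => 0
  semiFatou : ∀ (f : ℕ → 𝕋 → ℂ) (g : 𝕋 → ℂ),
    (∀ n, AEStronglyMeasurable (f n) μ) → AEStronglyMeasurable g μ →
    (∀ᵐ t ∂μ, Monotone (fun n => ‖f n t‖) ∧
      Tendsto (fun n => ‖f n t‖) atTop (𝓝 ‖g t‖)) →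
    N g < ⊤ → N g = ⨆ n, N (f n)

/-- Rearrangement invariance of the norm functional `N`. -/
def RearrInvN (N : NormFn) : Prop :=
  ∀ f g, AEStronglyMeasurable f μ → AEStronglyMeasurable g μ →
    (∀ lam : ℝ, 0 < lam → μ {t | lam < ‖f t‖} = μ {t | lam < ‖g t‖}) →
    N f = N g

/-- `f` is an order continuous element of the space of `N`. -/
def OrderContElemN (N : NormFn) (f : 𝕋 → ℂ) : Prop :=
  MemN N f ∧ ∀ g : ℕ → 𝕋 → ℂ, (∀ n, AEStronglyMeasurable (g n) μ) →
    (∀ n, ∀ᵐ t ∂μ, ‖g n t‖ ≤ ‖f t‖) →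
    (∀ᵐ t ∂μ, Tendsto (fun n => ‖g n t‖) atTop (𝓝 0)) →
    Tendsto (fun n => N (g n)) atTop (𝓝 0)

/-- The space of `N` is order continuous (equivalently, separable). -/
def OrderContN (N : NormFn) : Prop :=
  ∀ f, MemN N f → OrderContElemN N f

/-- The Fatou property of the norm functional `N`. -/
def FatouN (N : NormFn) : Prop :=
  ∀ (f : ℕ → 𝕋 → ℂ) (g : 𝕋 → ℂ),
    (∀ n, AEStronglyMeasurable (f n) μ) → AEStronglyMeasurable g μ →
    (∀ᵐ t ∂μ, Monotone (fun n => ‖f n t‖) ∧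
      Tendsto (fun n => ‖f n t‖) atTop (𝓝 ‖g t‖)) →
    N g = ⨆ n, N (f n)

/-!
Outer functions are not needed. For `u ∈ L²`, let `g` be the component of `u` orthogonal to the
closed span of `e^{int} u`, `n ≥ 1`. Then `|g|²` is real and analytic, hence constant, and after
normalization `g` is a unimodular `φ` such that `conj φ * u` is analytic, and `k * φ` is analytic
whenever `k ∈ L²` and `k * u` is analytic. So an analytic product `k * u` of square integrable
functions is the product of the analytic functions `k * φ` and `conj φ * u`, of the same moduli.
If `g = 0`, then `e^{-imt} k * u` is analytic for every `m ≥ 0`, so `k * u = 0`.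

If `h = f * g` is analytic with `f, g ∈ L¹`, write `h = P * Q` with `|P|² = |Q|² = |h|`, then
`P = A * B` and `Q = C * D` with `|A|², |C|² ≤ |f|` and `|B|², |D|² ≤ |g|`; the factorization is
`h = (A * C) * (B * D)`, where both factors are products of functions of `H²`. Conversely, if
`f = A * B` and `g = C * D` are such splittings of `f, g ∈ H¹` and `f * g` is integrable, then
`A * C` and `B * D` are in `H²`, and so `f * g = (A * C) * (B * D)` is in `H¹`.
-/

section ContinuousTesting

open scoped BoundedContinuousFunction NNReal

lemma ae_eq_zero_of_forall_integral_boundedContinuous_smul_eq_zero {Ω E : Type*}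
    [TopologicalSpace Ω] [MeasurableSpace Ω] [BorelSpace Ω] [HasOuterApproxClosed Ω]
    [NormedAddCommGroup E] [NormedSpace ℝ E] [CompleteSpace E] {ν : Measure Ω} {f : Ω → E}
    (hf : Integrable f ν) (h : ∀ g : Ω →ᵇ ℝ≥0, ∫ x, (g x : ℝ) • f x ∂ν = 0) : f =ᵐ[ν] 0 := by
  refine ae_eq_zero_of_forall_setIntegral_isClosed_eq_zero hf fun s hs ↦ ?_
  have hlim : Tendsto (fun n ↦ ∫ x, (hs.apprSeq n x : ℝ) • f x ∂ν) atTop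
      (𝓝 (∫ x, s.indicator f x ∂ν)) := by
    refine tendsto_integral_of_dominated_convergence (fun x ↦ ‖f x‖) (fun n ↦ ?_) hf.norm
      (fun n ↦ Eventually.of_forall fun x ↦ ?_) (Eventually.of_forall fun x ↦ ?_)
    · exact (NNReal.continuous_coe.comp
        (hs.apprSeq n).continuous).measurable.aestronglyMeasurable.smul hf.1
    · rw [norm_smul, Real.norm_of_nonneg (NNReal.coe_nonneg _)]
      exact mul_le_of_le_one_left (norm_nonneg _)
        (mod_cast HasOuterApproxClosed.apprSeq_apply_le_one hs n x)
    · have happr := (NNReal.continuous_coe.tendsto _).comp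
        (tendsto_pi_nhds.1 (HasOuterApproxClosed.tendsto_apprSeq hs) x)
      convert! happr.smul_const (f x) using 2
      by_cases hx : x ∈ s <;> simp [hx]
  rw [← integral_indicator hs.measurableSet]
  exact tendsto_nhds_unique hlim (by simp only [h, tendsto_const_nhds])

end ContinuousTesting

section SquareIntegrable

lemma norm_mul_sq_le {R : Type*} [NormedRing R] [NormMulClass R] {a b : R} {r s : ℝ}
    (ha : ‖a‖ ^ 2 ≤ r) (hb : ‖b‖ ^ 2 ≤ s) : ‖a * b‖ ^ 2 ≤ r * s := by
  rw [norm_mul, mul_pow]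
  exact mul_le_mul ha hb (sq_nonneg _) ((sq_nonneg _).trans ha)

variable {Ω : Type*} [MeasurableSpace Ω] {ν : Measure Ω}

lemma memLp_two_of_norm_sq_le {E F : Type*} [NormedAddCommGroup E] [NormedAddCommGroup F]
    {a : Ω → E} {f : Ω → F} (hf : Integrable f ν) (ha : AEStronglyMeasurable a ν)
    (h : ∀ᵐ x ∂ν, ‖a x‖ ^ 2 ≤ ‖f x‖) : MemLp a 2 ν := by
  rw [memLp_two_iff_integrable_sq_norm ha]
  refine hf.mono (ha.norm.pow 2) ?_
  filter_upwards [h] with x hx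
  rwa [Real.norm_of_nonneg (sq_nonneg _)]

lemma exists_memLp_two_mul_ae_eq_of_norm_sq_le {E F : Type*} [NormedAddCommGroup E]
    [NormedAddCommGroup F] {f : Ω → E} {g : Ω → F} {h : Ω → ℂ} (hf : Integrable f ν)
    (hg : Integrable g ν) (hh : AEStronglyMeasurable h ν)
    (hle : ∀ᵐ x ∂ν, ‖h x‖ ^ 2 ≤ ‖f x‖ * ‖g x‖) :
    ∃ k u : Ω → ℂ, MemLp k 2 ν ∧ MemLp u 2 ν ∧ (fun x ↦ k x * u x) =ᵐ[ν] h ∧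
      (∀ᵐ x ∂ν, ‖k x‖ ^ 2 ≤ ‖f x‖) ∧ ∀ᵐ x ∂ν, ‖u x‖ ^ 2 ≤ ‖g x‖ := by
  let u : Ω → ℂ := fun x ↦ (√‖g x‖ : ℝ)
  let k : Ω → ℂ := fun x ↦ h x / u x
  have hu_sq (x) : ‖u x‖ ^ 2 = ‖g x‖ := by
    simp only [u, Complex.norm_real, sq_abs, Real.norm_eq_abs, Real.sq_sqrt (norm_nonneg _)]
  have hu_meas : AEStronglyMeasurable u ν :=
    Complex.continuous_ofReal.comp_aestronglyMeasurable
      (Real.continuous_sqrt.comp_aestronglyMeasurable hg.1.norm)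
  have hk_meas : AEStronglyMeasurable k ν :=
    (hh.aemeasurable.div hu_meas.aemeasurable).aestronglyMeasurable
  have hu_le : ∀ᵐ x ∂ν, ‖u x‖ ^ 2 ≤ ‖g x‖ := Eventually.of_forall fun x ↦ (hu_sq x).le
  have hk_le : ∀ᵐ x ∂ν, ‖k x‖ ^ 2 ≤ ‖f x‖ := by
    filter_upwards [hle] with x hx
    rw [norm_div, div_pow, hu_sq]
    exact div_le_of_le_mul₀ (norm_nonneg _) (norm_nonneg _) hx
  refine ⟨k, u, memLp_two_of_norm_sq_le hf hk_meas hk_le, memLp_two_of_norm_sq_le hg hu_meas hu_le,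
    ?_, hk_le, hu_le⟩
  filter_upwards [hle] with x hx
  refine div_mul_cancel_of_imp fun hux ↦ ?_
  simpa [← hu_sq, hux] using hx

lemma memLp_conj {a : Ω → ℂ} {p : ℝ≥0∞} (ha : MemLp a p ν) :
    MemLp (fun x ↦ conj (a x)) p ν :=
  ha.star

lemma inner_toLp_toLp {a b : Ω → ℂ} (ha : MemLp a 2 ν) (hb : MemLp b 2 ν) :
    inner ℂ (ha.toLp a) (hb.toLp b) = ∫ x, conj (a x) * b x ∂ν := by
  rw [L2.inner_def]
  refine integral_congr_ae ?_
  filter_upwards [ha.coeFn_toLp, hb.coeFn_toLp] with x hax hbx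
  rw [hax, hbx, RCLike.inner_apply']

lemma exists_forall_inner_eq_zero_and_inner_eq {𝕜 E ι : Type*} [RCLike 𝕜] [NormedAddCommGroup E]
    [InnerProductSpace 𝕜 E] [CompleteSpace E] (v : ι → E) (x : E) :
    ∃ y : E, (∀ i, inner 𝕜 y (v i) = 0) ∧
      ∀ w : E, (∀ i, inner 𝕜 w (v i) = 0) → inner 𝕜 w y = inner 𝕜 w x := by
  let K := (Submodule.span 𝕜 (Set.range v))ᗮ
  have mem_K {w : E} : w ∈ K ↔ ∀ i, inner 𝕜 w (v i) = 0 := by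
    rw [Submodule.mem_orthogonal']
    refine ⟨fun h i ↦ h _ (Submodule.subset_span ⟨i, rfl⟩), fun h z hz ↦ ?_⟩
    have hspan : Submodule.span 𝕜 (Set.range v) ≤ (innerSL 𝕜 w).ker :=
      Submodule.span_le.2 (Set.range_subset_iff.2 h)
    exact hspan hz
  refine ⟨K.starProjection x, mem_K.1 (K.starProjection_apply_mem x), fun w hw ↦ ?_⟩
  rw [← K.inner_starProjection_left_eq_right, K.starProjection_eq_self_iff.2 (mem_K.2 hw)]

end SquareIntegrable

section Circle

open AddCircle

lemma norm_fourier_apply {T : ℝ} (n : ℤ) (t : AddCircle T) : ‖fourier n t‖ = 1 := by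
  rw [fourier_apply, Circle.norm_coe]

variable {T : ℝ} [hT : Fact (0 < T)]

section FourierCoefficients

lemma memLp_fourier_mul {f : AddCircle T → ℂ} {p : ℝ≥0∞} (hf : MemLp f p haarAddCircle) (n : ℤ) :
    MemLp (fun t ↦ fourier n t * f t) p haarAddCircle := by
  refine hf.of_le ((fourier n).continuous.aestronglyMeasurable.mul hf.1) ?_
  simp only [norm_mul, norm_fourier_apply, one_mul, le_refl, eventually_true]

lemma fourierCoeff_zero (f : AddCircle T → ℂ) : fourierCoeff f 0 = ∫ t, f t ∂haarAddCircle := by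
  simp [fourierCoeff]

lemma fourierCoeff_fourier_mul (f : AddCircle T → ℂ) (m n : ℤ) :
    fourierCoeff (fun t ↦ fourier m t * f t) n = fourierCoeff f (n - m) := by
  simp only [fourierCoeff, smul_eq_mul, ← mul_assoc, ← fourier_add, neg_sub, neg_add_eq_sub]

lemma fourierCoeff_conj (f : AddCircle T → ℂ) (n : ℤ) :
    fourierCoeff (fun t ↦ conj (f t)) n = conj (fourierCoeff f (-n)) := by
  simp only [fourierCoeff, ← integral_conj, smul_eq_mul, map_mul, ← fourier_neg,
    neg_neg]

lemma fourierCoeff_const (c : ℂ) :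
    fourierCoeff (fun _ : AddCircle T ↦ c) = Pi.single 0 c := by
  have h := fourierCoeff.const_mul (fourier (T := T) 0) c
  simp only [fourierCoeff_fourier, fourier_zero, mul_one] at h
  ext n
  rw [h, Pi.single_apply, Pi.single_apply, mul_ite, mul_one, mul_zero]

lemma integral_continuousMap_smul_eq_zero_of_fourierCoeff_eq_zero {E : Type*}
    [NormedAddCommGroup E] [NormedSpace ℂ E] {f : AddCircle T → E}
    (hf : Integrable f haarAddCircle) (h : ∀ n, fourierCoeff f n = 0) (g : C(AddCircle T, ℂ)) :
    ∫ t, g t • f t ∂haarAddCircle = 0 := by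
  have hint (g : C(AddCircle T, ℂ)) : Integrable (fun t ↦ g t • f t) haarAddCircle :=
    hf.bdd_smul ‖g‖ g.continuous.aestronglyMeasurable (Eventually.of_forall g.norm_coe_le_norm)
  let pairing : C(AddCircle T, ℂ) →ₗ[ℂ] E :=
    { toFun := fun g ↦ ∫ t, g t • f t ∂haarAddCircle
      map_add' := fun g₁ g₂ ↦ by
        simp only [ContinuousMap.add_apply, add_smul, integral_add (hint g₁) (hint g₂)]
      map_smul' := fun c g ↦ by
        simp only [ContinuousMap.smul_apply, smul_assoc, integral_smul, RingHom.id_apply] }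
  have hbound (g : C(AddCircle T, ℂ)) :
      ‖pairing g‖ ≤ (∫ t, ‖f t‖ ∂haarAddCircle) * ‖g‖ := by
    rw [mul_comm, ← integral_const_mul]
    refine norm_integral_le_of_norm_le (hf.norm.const_mul _) (Eventually.of_forall fun t ↦ ?_)
    rw [norm_smul]
    gcongr
    exact g.norm_coe_le_norm t
  let L := pairing.mkContinuous _ hbound
  have hker : (Submodule.span ℂ (Set.range (@fourier T))).topologicalClosure ≤ L.ker := by
    refine Submodule.topologicalClosure_minimal _ (Submodule.span_le.2 ?_) L.isClosed_ker
    rintro _ ⟨n, rfl⟩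
    change ∫ t, fourier n t • f t ∂haarAddCircle = 0
    simpa only [fourierCoeff, neg_neg] using h (-n)
  rw [span_fourier_closure_eq_top] at hker
  exact hker (Submodule.mem_top (x := g))

lemma ae_eq_zero_of_fourierCoeff_eq_zero {E : Type*} [NormedAddCommGroup E] [NormedSpace ℂ E]
    [CompleteSpace E] {f : AddCircle T → E} (hf : Integrable f haarAddCircle)
    (h : ∀ n, fourierCoeff f n = 0) : f =ᵐ[haarAddCircle] 0 := by
  refine ae_eq_zero_of_forall_integral_boundedContinuous_smul_eq_zero hf fun g ↦ ?_
  have hg := integral_continuousMap_smul_eq_zero_of_fourierCoeff_eq_zero hf h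
    ⟨fun t ↦ ((g t : ℝ) : ℂ), by fun_prop⟩
  simpa only [ContinuousMap.coe_mk, Complex.coe_smul] using hg

lemma ae_eq_of_fourierCoeff_eq {E : Type*} [NormedAddCommGroup E] [NormedSpace ℂ E]
    [CompleteSpace E] {f g : AddCircle T → E} (hf : Integrable f haarAddCircle)
    (hg : Integrable g haarAddCircle) (h : fourierCoeff f = fourierCoeff g) :
    f =ᵐ[haarAddCircle] g := by
  refine eventuallyEq_iff_sub.2 (ae_eq_zero_of_fourierCoeff_eq_zero (hf.sub hg) fun n ↦ ?_)
  have hn := congrFun h n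
  simp only [fourierCoeff] at hn
  simp only [fourierCoeff, Pi.sub_apply, smul_sub]
  rw [integral_sub (hf.fourier_smul _) (hg.fourier_smul _), hn, sub_self]

lemma hasSum_fourierCoeff_mul {a b : AddCircle T → ℂ} (ha : MemLp a 2 haarAddCircle)
    (hb : MemLp b 2 haarAddCircle) (n : ℤ) :
    HasSum (fun i ↦ fourierCoeff a (n - i) * fourierCoeff b i)
      (fourierCoeff (fun t ↦ a t * b t) n) := by
  let w : AddCircle T → ℂ := fun t ↦ conj (fourier (-n) t * a t)
  have hw : MemLp w 2 haarAddCircle := memLp_conj (memLp_fourier_mul ha (-n))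
  have hw_coeff (i : ℤ) : conj (fourierCoeff w i) = fourierCoeff a (n - i) := by
    rw [fourierCoeff_conj, Complex.conj_conj, fourierCoeff_fourier_mul]
    congr 1
    ring
  have hwb : fourierCoeff (fun t ↦ a t * b t) n = inner ℂ (hw.toLp w) (hb.toLp b) := by
    simp only [inner_toLp_toLp, w, fourierCoeff, smul_eq_mul, Complex.conj_conj, mul_assoc]
  rw [hwb]
  convert! fourierBasis.hasSum_inner_mul_inner (hw.toLp w) (hb.toLp b) using 2 with i
  rw [← inner_conj_symm, ← fourierBasis.repr_apply_apply, ← fourierBasis.repr_apply_apply,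
    fourierBasis_repr, fourierBasis_repr, fourierCoeff_congr_ae hw.coeFn_toLp,
    fourierCoeff_congr_ae hb.coeFn_toLp, hw_coeff]

end FourierCoefficients

/-- The Hardy space `H¹` of the circle, its elements being identified with their boundary values:
integrable functions without negative frequencies. -/
structure MemHardyOne (f : AddCircle T → ℂ) : Prop where
  integrable : Integrable f haarAddCircle
  fourierCoeff_eq_zero : ∀ n < 0, fourierCoeff f n = 0

namespace MemHardyOne

variable {f g h : AddCircle T → ℂ}

lemma zero : MemHardyOne fun _ : AddCircle T ↦ (0 : ℂ) :=
  ⟨integrable_zero _ _ _, fun n _ ↦ by simp [fourierCoeff]⟩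

lemma congr (hf : MemHardyOne f) (hfg : f =ᵐ[haarAddCircle] g) : MemHardyOne g :=
  ⟨hf.integrable.congr hfg, fourierCoeff_congr_ae hfg ▸ hf.fourierCoeff_eq_zero⟩

lemma const_mul (hf : MemHardyOne f) (c : ℂ) : MemHardyOne fun t ↦ c * f t :=
  ⟨hf.integrable.const_mul c, fun n hn ↦ by
    rw [fourierCoeff.const_mul, hf.fourierCoeff_eq_zero n hn, mul_zero]⟩

lemma fourier_mul (hf : MemHardyOne f) (m : ℕ) : MemHardyOne fun t ↦ fourier m t * f t :=
  ⟨hf.integrable.fourier_smul m, fun n hn ↦ by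
    rw [fourierCoeff_fourier_mul, hf.fourierCoeff_eq_zero _ (by lia)]⟩

lemma fourier_neg_one_mul (hf : MemHardyOne f) (h0 : fourierCoeff f 0 = 0) :
    MemHardyOne fun t ↦ fourier (-1) t * f t := by
  refine ⟨hf.integrable.fourier_smul (-1), fun n hn ↦ ?_⟩
  rw [fourierCoeff_fourier_mul]
  obtain rfl | hn' : n = -1 ∨ n - -1 < 0 := by lia
  · simpa using h0
  · exact hf.fourierCoeff_eq_zero _ hn'

lemma ae_eq_const (hf : MemHardyOne f) (hf' : MemHardyOne fun t ↦ conj (f t)) :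
    f =ᵐ[haarAddCircle] fun _ ↦ fourierCoeff f 0 := by
  have hpos (n : ℤ) (hn : 0 < n) : fourierCoeff f n = 0 := by
    simpa [fourierCoeff_conj] using hf'.fourierCoeff_eq_zero (-n) (by lia)
  refine ae_eq_of_fourierCoeff_eq hf.integrable (integrable_const _) (funext fun n ↦ ?_)
  rw [fourierCoeff_const]
  obtain rfl | hn := eq_or_ne n 0
  · rw [Pi.single_eq_same]
  · rw [Pi.single_eq_of_ne hn]
    exact hn.lt_or_gt.elim (hf.fourierCoeff_eq_zero n) (hpos n)

lemma mul_of_memLp_two (hf : MemHardyOne f) (hg : MemHardyOne g) (hf2 : MemLp f 2 haarAddCircle)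
    (hg2 : MemLp g 2 haarAddCircle) : MemHardyOne fun t ↦ f t * g t := by
  refine ⟨hf2.integrable_mul hg2, fun n hn ↦ (hasSum_fourierCoeff_mul hf2 hg2 n).unique ?_⟩
  convert! hasSum_zero with i
  obtain hi | hi : i < 0 ∨ n - i < 0 := by lia
  · rw [hg.fourierCoeff_eq_zero i hi, mul_zero]
  · rw [hf.fourierCoeff_eq_zero _ hi, zero_mul]

end MemHardyOne

/-- `g` is the wandering part of `u ∈ L²`: the component of `u` orthogonal to the closed span of
the functions `e^{int} u` with `n ≥ 1`. The orthogonality of `g` to this span is encoded by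
`conj_mul`, and `g - u` being in the span by `fourierCoeff_mul_zero`, the functions `conj k` with
`k * u` in `H¹` being those orthogonal to it. -/
structure IsWanderingPart (g u : AddCircle T → ℂ) : Prop where
  memLp : MemLp g 2 haarAddCircle
  conj_mul : MemHardyOne fun t ↦ conj (g t) * u t
  fourierCoeff_mul_zero : ∀ k, MemLp k 2 haarAddCircle → MemHardyOne (fun t ↦ k t * u t) →
    fourierCoeff (fun t ↦ k t * g t) 0 = fourierCoeff (fun t ↦ k t * u t) 0

lemma exists_isWanderingPart {u : AddCircle T → ℂ} (hu : MemLp u 2 haarAddCircle) :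
    ∃ g, IsWanderingPart g u := by
  have hv (i : ℕ) : MemLp (fun t ↦ fourier (i + 1) t * u t) 2 haarAddCircle :=
    memLp_fourier_mul hu _
  have inner_eq_zero_iff {k : AddCircle T → ℂ} (hk : MemLp k 2 haarAddCircle) (i : ℕ) :
      inner ℂ (hk.toLp k) ((hv i).toLp _) = 0 ↔
        fourierCoeff (fun t ↦ conj (k t) * u t) (-(i + 1)) = 0 := by
    simp only [inner_toLp_toLp, fourierCoeff, smul_eq_mul, neg_neg, mul_left_comm]
  obtain ⟨y, hy, hproj⟩ := exists_forall_inner_eq_zero_and_inner_eq (𝕜 := ℂ)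
    (fun i ↦ (hv i).toLp _) (hu.toLp u)
  have hy2 := Lp.memLp y
  refine ⟨y, hy2, ⟨(memLp_conj hy2).integrable_mul hu, fun n hn ↦ ?_⟩, fun k hk hku ↦ ?_⟩
  · obtain ⟨i, rfl⟩ : ∃ i : ℕ, n = -(i + 1) := ⟨(-n - 1).toNat, by lia⟩
    rw [← inner_eq_zero_iff hy2, Lp.toLp_coeFn]
    exact hy i
  · have hk' := memLp_conj hk
    have h := hproj (hk'.toLp _) fun i ↦ (inner_eq_zero_iff hk' i).2 <| by
      simpa only [Complex.conj_conj] using hku.fourierCoeff_eq_zero _ (by lia)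
    rw [← Lp.toLp_coeFn y hy2, inner_toLp_toLp, inner_toLp_toLp] at h
    simpa only [fourierCoeff_zero, Complex.conj_conj] using h

namespace IsWanderingPart

variable {g k u : AddCircle T → ℂ}

lemma memHardyOne_mul (hg : IsWanderingPart g u) (hk : MemLp k 2 haarAddCircle)
    (hku : MemHardyOne fun t ↦ k t * u t) : MemHardyOne fun t ↦ k t * g t := by
  refine ⟨hk.integrable_mul hg.memLp, fun n hn ↦ ?_⟩
  obtain ⟨m, rfl⟩ : ∃ m : ℕ, n = -m := ⟨(-n).toNat, by lia⟩
  have h := hg.fourierCoeff_mul_zero _ (memLp_fourier_mul hk m)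
    (by simpa only [mul_assoc] using hku.fourier_mul m)
  simp only [mul_assoc, fourierCoeff_fourier_mul, zero_sub] at h
  rw [h, hku.fourierCoeff_eq_zero _ hn]

lemma exists_ae_norm_eq_const (hg : IsWanderingPart g u) :
    ∃ c : ℝ, ∀ᵐ t ∂haarAddCircle, ‖g t‖ = c := by
  have hsq : MemHardyOne fun t ↦ conj (g t) * g t :=
    hg.memHardyOne_mul (memLp_conj hg.memLp) hg.conj_mul
  have hsq' : MemHardyOne fun t ↦ conj (conj (g t) * g t) := by
    simpa only [map_mul, Complex.conj_conj, mul_comm] using hsq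
  refine ⟨√‖fourierCoeff (fun t ↦ conj (g t) * g t) 0‖, ?_⟩
  filter_upwards [hsq.ae_eq_const hsq'] with t ht
  rw [← ht, norm_mul, RCLike.norm_conj, Real.sqrt_mul_self (norm_nonneg _)]

lemma memHardyOne_fourier_neg_mul (hg : IsWanderingPart g u) (hg0 : g =ᵐ[haarAddCircle] 0)
    (hk : MemLp k 2 haarAddCircle) (hku : MemHardyOne fun t ↦ k t * u t) (m : ℕ) :
    MemHardyOne fun t ↦ fourier (-m) t * (k t * u t) := by
  induction m with
  | zero => simpa only [Nat.cast_zero, neg_zero, fourier_zero, one_mul] using hku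
  | succ m ih =>
    have hmean : fourierCoeff (fun t ↦ fourier (-m) t * (k t * u t)) 0 = 0 := by
      have h := hg.fourierCoeff_mul_zero _ (memLp_fourier_mul hk (-m))
        (by simpa only [mul_assoc] using ih)
      simp only [mul_assoc] at h
      rw [← h, fourierCoeff_zero]
      refine integral_eq_zero_of_ae ?_
      filter_upwards [hg0] with t ht
      simp only [ht, Pi.zero_apply, mul_zero]
    simpa only [← mul_assoc, ← fourier_add, ← neg_add_rev, Nat.cast_succ]
      using ih.fourier_neg_one_mul hmean

lemma mul_ae_eq_zero (hg : IsWanderingPart g u) (hg0 : g =ᵐ[haarAddCircle] 0)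
    (hk : MemLp k 2 haarAddCircle) (hku : MemHardyOne fun t ↦ k t * u t) :
    (fun t ↦ k t * u t) =ᵐ[haarAddCircle] 0 := by
  refine ae_eq_zero_of_fourierCoeff_eq_zero hku.integrable fun n ↦ ?_
  have h := (hg.memHardyOne_fourier_neg_mul hg0 hk hku (n + 1).toNat).fourierCoeff_eq_zero
    (n - (n + 1).toNat) (by lia)
  rwa [fourierCoeff_fourier_mul, sub_neg_eq_add, sub_add_cancel] at h

end IsWanderingPart

lemma exists_unimodular_memHardyOne_mul {u k : AddCircle T → ℂ} (hu : MemLp u 2 haarAddCircle)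
    (hk : MemLp k 2 haarAddCircle) (hku : MemHardyOne fun t ↦ k t * u t)
    (hku0 : ¬ (fun t ↦ k t * u t) =ᵐ[haarAddCircle] 0) :
    ∃ φ : AddCircle T → ℂ, (∀ᵐ t ∂haarAddCircle, ‖φ t‖ = 1) ∧
      MemHardyOne (fun t ↦ conj (φ t) * u t) ∧ MemHardyOne fun t ↦ k t * φ t := by
  obtain ⟨g, hg⟩ := exists_isWanderingPart hu
  obtain ⟨c, hc⟩ := hg.exists_ae_norm_eq_const
  have hc0 : c ≠ 0 := by
    rintro rfl
    exact hku0 (hg.mul_ae_eq_zero (hc.mono fun t ht ↦ norm_eq_zero.1 ht) hk hku)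
  refine ⟨fun t ↦ (c : ℂ)⁻¹ * g t, ?_, ?_, ?_⟩
  · filter_upwards [hc] with t ht
    rw [norm_mul, norm_inv, Complex.norm_real, ht, Real.norm_of_nonneg (ht ▸ norm_nonneg _),
      inv_mul_cancel₀ hc0]
  · simpa only [map_mul, map_inv₀, Complex.conj_ofReal, mul_assoc]
      using hg.conj_mul.const_mul (c : ℂ)⁻¹
  · simpa only [mul_left_comm] using (hg.memHardyOne_mul hk hku).const_mul (c : ℂ)⁻¹

namespace MemHardyOne

variable {f g h : AddCircle T → ℂ}

lemma exists_mul_ae_eq_of_norm_sq_le (hh : MemHardyOne h) (hf : Integrable f haarAddCircle)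
    (hg : Integrable g haarAddCircle) (hle : ∀ᵐ t ∂haarAddCircle, ‖h t‖ ^ 2 ≤ ‖f t‖ * ‖g t‖) :
    ∃ F G, MemHardyOne F ∧ MemHardyOne G ∧ (h =ᵐ[haarAddCircle] fun t ↦ F t * G t) ∧
      (∀ᵐ t ∂haarAddCircle, ‖F t‖ ^ 2 ≤ ‖f t‖) ∧ ∀ᵐ t ∂haarAddCircle, ‖G t‖ ^ 2 ≤ ‖g t‖ := by
  by_cases hh0 : h =ᵐ[haarAddCircle] 0
  · exact ⟨fun _ ↦ 0, fun _ ↦ 0, .zero, .zero, by simpa only [mul_zero] using! hh0,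
      Eventually.of_forall fun t ↦ by simp, Eventually.of_forall fun t ↦ by simp⟩
  obtain ⟨k, u, hk, hu, hku, hk_le, hu_le⟩ :=
    exists_memLp_two_mul_ae_eq_of_norm_sq_le hf hg hh.integrable.1 hle
  obtain ⟨φ, hφ, hφu, hkφ⟩ := exists_unimodular_memHardyOne_mul hu hk (hh.congr hku.symm)
    fun h0 ↦ hh0 (hku.symm.trans h0)
  refine ⟨_, _, hkφ, hφu, ?_, ?_, ?_⟩
  · filter_upwards [hku, hφ] with t hkut hφt
    rw [← hkut, mul_assoc, ← mul_assoc (φ t), Complex.mul_conj', hφt, Complex.ofReal_one, one_pow,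
      one_mul]
  · filter_upwards [hφ, hk_le] with t hφt hkt
    rwa [norm_mul, hφt, mul_one]
  · filter_upwards [hφ, hu_le] with t hφt hut
    rwa [norm_mul, RCLike.norm_conj, hφt, one_mul]

lemma exists_mul_ae_eq_norm_sq_le (hh : MemHardyOne h) :
    ∃ F G, MemHardyOne F ∧ MemHardyOne G ∧ (h =ᵐ[haarAddCircle] fun t ↦ F t * G t) ∧
      (∀ᵐ t ∂haarAddCircle, ‖F t‖ ^ 2 ≤ ‖h t‖) ∧ ∀ᵐ t ∂haarAddCircle, ‖G t‖ ^ 2 ≤ ‖h t‖ :=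
  hh.exists_mul_ae_eq_of_norm_sq_le hh.integrable hh.integrable
    (Eventually.of_forall fun _ ↦ (sq _).le)

lemma mul_of_norm_sq_le {a b : AddCircle T → ℂ} (ha : MemHardyOne a) (hb : MemHardyOne b)
    (hf : Integrable f haarAddCircle) (hg : Integrable g haarAddCircle)
    (haf : ∀ᵐ t ∂haarAddCircle, ‖a t‖ ^ 2 ≤ ‖f t‖)
    (hbg : ∀ᵐ t ∂haarAddCircle, ‖b t‖ ^ 2 ≤ ‖g t‖) : MemHardyOne fun t ↦ a t * b t :=
  ha.mul_of_memLp_two hb (memLp_two_of_norm_sq_le hf ha.integrable.1 haf)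
    (memLp_two_of_norm_sq_le hg hb.integrable.1 hbg)

lemma mul (hf : MemHardyOne f) (hg : MemHardyOne g)
    (hfg : Integrable (fun t ↦ f t * g t) haarAddCircle) : MemHardyOne fun t ↦ f t * g t := by
  obtain ⟨A, B, hA, hB, hAB, hA_le, hB_le⟩ := hf.exists_mul_ae_eq_norm_sq_le
  obtain ⟨C, D, hC, hD, hCD, hC_le, hD_le⟩ := hg.exists_mul_ae_eq_norm_sq_le
  have hAC := hA.mul_of_norm_sq_le hC hf.integrable hg.integrable hA_le hC_le
  have hBD := hB.mul_of_norm_sq_le hD hf.integrable hg.integrable hB_le hD_le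
  have norm_sq_le {a c : AddCircle T → ℂ} (ha : ∀ᵐ t ∂haarAddCircle, ‖a t‖ ^ 2 ≤ ‖f t‖)
      (hc : ∀ᵐ t ∂haarAddCircle, ‖c t‖ ^ 2 ≤ ‖g t‖) :
      ∀ᵐ t ∂haarAddCircle, ‖a t * c t‖ ^ 2 ≤ ‖f t * g t‖ := by
    filter_upwards [ha, hc] with t hat hct
    exact norm_mul (f t) (g t) ▸ norm_mul_sq_le hat hct
  refine (hAC.mul_of_norm_sq_le hBD hfg hfg (norm_sq_le hA_le hC_le)
    (norm_sq_le hB_le hD_le)).congr ?_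
  filter_upwards [hAB, hCD] with t hABt hCDt
  rw [hABt, hCDt, mul_mul_mul_comm]

lemma exists_mul_ae_eq_norm_le (hh : MemHardyOne h) (hf : Integrable f haarAddCircle)
    (hg : Integrable g haarAddCircle) (hfg : h =ᵐ[haarAddCircle] fun t ↦ f t * g t) :
    ∃ F G, MemHardyOne F ∧ MemHardyOne G ∧ (h =ᵐ[haarAddCircle] fun t ↦ F t * G t) ∧
      (∀ᵐ t ∂haarAddCircle, ‖F t‖ ≤ ‖f t‖) ∧ ∀ᵐ t ∂haarAddCircle, ‖G t‖ ≤ ‖g t‖ := by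
  obtain ⟨P, Q, hP, hQ, hPQ, hP_le, hQ_le⟩ := hh.exists_mul_ae_eq_norm_sq_le
  have split {R : AddCircle T → ℂ} (hR : MemHardyOne R)
      (hR_le : ∀ᵐ t ∂haarAddCircle, ‖R t‖ ^ 2 ≤ ‖h t‖) :=
    hR.exists_mul_ae_eq_of_norm_sq_le hf hg <| by
      filter_upwards [hR_le, hfg] with t hRt ht
      rwa [ht, norm_mul] at hRt
  obtain ⟨A, B, hA, hB, hAB, hA_le, hB_le⟩ := split hP hP_le
  obtain ⟨C, D, hC, hD, hCD, hC_le, hD_le⟩ := split hQ hQ_le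
  have norm_le {a b c : AddCircle T → ℂ} (ha : ∀ᵐ t ∂haarAddCircle, ‖a t‖ ^ 2 ≤ ‖c t‖)
      (hb : ∀ᵐ t ∂haarAddCircle, ‖b t‖ ^ 2 ≤ ‖c t‖) :
      ∀ᵐ t ∂haarAddCircle, ‖a t * b t‖ ≤ ‖c t‖ := by
    filter_upwards [ha, hb] with t hat hbt
    exact le_of_sq_le_sq (sq ‖c t‖ ▸ norm_mul_sq_le hat hbt) (norm_nonneg _)
  refine ⟨_, _, hA.mul_of_norm_sq_le hC hf hf hA_le hC_le,
    hB.mul_of_norm_sq_le hD hg hg hB_le hD_le, ?_, norm_le hA_le hC_le, norm_le hB_le hD_le⟩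
  filter_upwards [hPQ, hAB, hCD] with t hPQt hABt hCDt
  rw [hPQt, hABt, hCDt, mul_mul_mul_comm]

end MemHardyOne

end Circle

/-- The inclusion `X ⊙ Y ⊂ L¹` for the spaces determined by the norm functionals `NX` and `NY`. -/
def ProdSubsetLOne (NX NY : NormFn) : Prop :=
  ∀ f g, MemN NX f → MemN NY g → Integrable (fun t ↦ f t * g t) μ

namespace ProdSubsetLOne

variable {NX NY : NormFn} {f g : 𝕋 → ℂ}

lemma symm (h : ProdSubsetLOne NX NY) : ProdSubsetLOne NY NX := fun g f hg hf ↦ by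
  simpa only [mul_comm] using h f g hf hg

lemma integrable_left (h : ProdSubsetLOne NX NY) (hone : MemN NY fun _ ↦ 1) (hf : MemN NX f) :
    Integrable f μ := by
  simpa only [mul_one] using h f _ hf hone

lemma integrable_right (h : ProdSubsetLOne NX NY) (hone : MemN NX fun _ ↦ 1) (hg : MemN NY g) :
    Integrable g μ :=
  h.symm.integrable_left hone hg

end ProdSubsetLOne

lemma HardyMemN.memN {N : NormFn} {f : 𝕋 → ℂ} (hf : HardyMemN N f) : MemN N f :=
  ⟨hf.1, hf.2.1⟩

lemma HardyMemN.memHardyOne {N : NormFn} {f : 𝕋 → ℂ} (hf : HardyMemN N f)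
    (hint : Integrable f μ) : MemHardyOne f :=
  ⟨hint, hf.2.2⟩

lemma MemHardyOne.hardyMemN {N : NormFn} {f : 𝕋 → ℂ} (hf : MemHardyOne f) (hN : N f < ⊤) :
    HardyMemN N f :=
  ⟨hf.integrable.1, hN, hf.fourierCoeff_eq_zero⟩

lemma prodN_le_mul {NX NY : NormFn} {f g h : 𝕋 → ℂ} (hf : AEStronglyMeasurable f μ)
    (hg : AEStronglyMeasurable g μ) (hfg : h =ᵐ[μ] fun t ↦ f t * g t) :
    prodN NX NY h ≤ NX f * NY g :=
  iInf_le_of_le ⟨(f, g), hf, hg, hfg⟩ le_rfl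

namespace QBFS

variable {X Y : QBFS} {f g h : 𝕋 → ℂ}

lemma memN_one (X : QBFS) : MemN X.N fun _ ↦ 1 :=
  ⟨aestronglyMeasurable_const, X.const_finite⟩

lemma N_zero (X : QBFS) : X.N (fun _ ↦ 0) = 0 := by
  simpa using X.smul_eq 0 fun _ ↦ 0

lemma memHardyOne_mul (hprod : ProdSubsetLOne X.N Y.N) (hf : HardyMemN X.N f)
    (hg : HardyMemN Y.N g) : MemHardyOne fun t ↦ f t * g t :=
  (hf.memHardyOne (hprod.integrable_left Y.memN_one hf.memN)).mul
    (hg.memHardyOne (hprod.integrable_right X.memN_one hg.memN)) (hprod f g hf.memN hg.memN)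

lemma memN_of_N_mul_N_lt_top (hf : AEStronglyMeasurable f μ) (hg : AEStronglyMeasurable g μ)
    (hfg : ¬ (fun t ↦ f t * g t) =ᵐ[μ] fun _ ↦ 0) (hlt : X.N f * Y.N g < ⊤) :
    MemN X.N f ∧ MemN Y.N g := by
  have hf0 : X.N f ≠ 0 := fun h0 ↦ hfg <|
    (X.norm_eq_zero f hf h0).mono fun t ht ↦ by simp only [ht, zero_mul]
  have hg0 : Y.N g ≠ 0 := fun h0 ↦ hfg <|
    (Y.norm_eq_zero g hg h0).mono fun t ht ↦ by simp only [ht, mul_zero]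
  exact ⟨⟨hf, ENNReal.lt_top_of_mul_ne_top_left hlt.ne hg0⟩,
    ⟨hg, ENNReal.lt_top_of_mul_ne_top_right hlt.ne hf0⟩⟩

lemma exists_hardyMemN_mul_ae_eq (hprod : ProdSubsetLOne X.N Y.N)
    (hh : ∀ n : ℤ, n < 0 → fourierCoeff h n = 0) (hf : AEStronglyMeasurable f μ)
    (hg : AEStronglyMeasurable g μ) (hfg : h =ᵐ[μ] fun t ↦ f t * g t)
    (hlt : X.N f * Y.N g < ⊤) :
    ∃ F G, HardyMemN X.N F ∧ HardyMemN Y.N G ∧ (h =ᵐ[μ] fun t ↦ F t * G t) ∧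
      X.N F * Y.N G ≤ X.N f * Y.N g := by
  by_cases hh0 : h =ᵐ[μ] fun _ ↦ 0
  · refine ⟨fun _ ↦ 0, fun _ ↦ 0, MemHardyOne.zero.hardyMemN ?_, MemHardyOne.zero.hardyMemN ?_,
      ?_, ?_⟩
    · simp only [N_zero, ENNReal.zero_lt_top]
    · simp only [N_zero, ENNReal.zero_lt_top]
    · simpa only [mul_zero] using hh0
    · simp only [N_zero, mul_zero, zero_le]
  obtain ⟨hfX, hgY⟩ := memN_of_N_mul_N_lt_top hf hg (fun h0 ↦ hh0 (hfg.trans h0)) hlt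
  have hh1 : MemHardyOne h := ⟨(hprod f g hfX hgY).congr hfg.symm, hh⟩
  obtain ⟨F, G, hF, hG, hFG, hF_le, hG_le⟩ := hh1.exists_mul_ae_eq_norm_le
    (hprod.integrable_left Y.memN_one hfX) (hprod.integrable_right X.memN_one hgY) hfg
  have hFX := X.ideal f F hF.integrable.1 hF_le
  have hGY := Y.ideal g G hG.integrable.1 hG_le
  exact ⟨F, G, hF.hardyMemN (hFX.trans_lt hfX.2), hG.hardyMemN (hGY.trans_lt hgY.2), hFG,
    mul_le_mul' hFX hGY⟩

end QBFS

/-- A Banach function space as a quasi-Banach function space, with quasi-triangle constant `1`. -/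
def BFS.toQBFS (X : BFS) : QBFS where
  __ := X
  kappa := 1
  one_le_kappa := le_rfl
  kappa_finite := ENNReal.one_lt_top
  add_le f g := (X.add_le f g).trans_eq (one_mul _).symm

theorem hardy_product_theorem_general (X Y : QBFS) (hprod : ProdSubsetLOne X.N Y.N) :
    (∀ h, (∃ f g, HardyMemN X.N f ∧ HardyMemN Y.N g ∧ h =ᵐ[μ] fun t ↦ f t * g t) ↔
      (prodN X.N Y.N h < ⊤ ∧ ∀ n : ℤ, n < 0 → fourierCoeff h n = 0)) ∧
    (∀ h, (∀ n : ℤ, n < 0 → fourierCoeff h n = 0) →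
      (⨅ p : {p : (𝕋 → ℂ) × (𝕋 → ℂ) // HardyMemN X.N p.1 ∧ HardyMemN Y.N p.2 ∧
          h =ᵐ[μ] fun t ↦ p.1 t * p.2 t}, X.N p.1.1 * Y.N p.1.2)
        = prodN X.N Y.N h) := by
  refine ⟨fun h ↦ ⟨?_, ?_⟩, fun h hh ↦ le_antisymm (le_iInf ?_) (le_iInf ?_)⟩
  · rintro ⟨f, g, hf, hg, hfg⟩
    exact ⟨(prodN_le_mul hf.1 hg.1 hfg).trans_lt (ENNReal.mul_lt_top hf.2.1 hg.2.1),
      ((QBFS.memHardyOne_mul hprod hf hg).congr hfg.symm).fourierCoeff_eq_zero⟩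
  · rintro ⟨hlt, hh⟩
    obtain ⟨⟨⟨f, g⟩, hf, hg, hfg⟩, hfg_lt⟩ := iInf_lt_iff.1 hlt
    obtain ⟨F, G, hF, hG, hFG, -⟩ :=
      QBFS.exists_hardyMemN_mul_ae_eq hprod hh hf hg hfg hfg_lt
    exact ⟨F, G, hF, hG, hFG⟩
  · rintro ⟨⟨f, g⟩, hf, hg, hfg⟩
    obtain htop | hlt := eq_top_or_lt_top (X.N f * Y.N g)
    · exact le_top.trans_eq htop.symm
    · obtain ⟨F, G, hF, hG, hFG, hle⟩ :=
        QBFS.exists_hardyMemN_mul_ae_eq hprod hh hf hg hfg hlt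
      exact iInf_le_of_le ⟨(F, G), hF, hG, hFG⟩ hle
  · rintro ⟨⟨f, g⟩, hf, hg, hfg⟩
    exact prodN_le_mul hf.1 hg.1 hfg

/-- **Product of Hardy spaces.** If `X, Y` are rearrangement-invariant Banach
function spaces over `𝕋` with `X ⊙ Y ⊂ L¹`, then `H[X] ⊙ H[Y] = H[X ⊙ Y]` with equality
of (quasi-)norms. -/
theorem hardy_product_theorem (X Y : BFS) (hriX : RearrInvN X.N) (hriY : RearrInvN Y.N)
    (hprod : ∀ f g, MemN X.N f → MemN Y.N g → Integrable (fun t => f t * g t) μ) :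
    (∀ h, AEStronglyMeasurable h μ →
      ((∃ f g, HardyMemN X.N f ∧ HardyMemN Y.N g ∧ h =ᵐ[μ] fun t => f t * g t) ↔
        (prodN X.N Y.N h < ⊤ ∧ ∀ n : ℤ, n < 0 → fourierCoeff h n = 0))) ∧
    (∀ h, AEStronglyMeasurable h μ → (∀ n : ℤ, n < 0 → fourierCoeff h n = 0) →
      (⨅ p : {p : (𝕋 → ℂ) × (𝕋 → ℂ) // HardyMemN X.N p.1 ∧ HardyMemN Y.N p.2 ∧
          h =ᵐ[μ] fun t => p.1 t * p.2 t}, X.N p.1.1 * Y.N p.1.2)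
        = prodN X.N Y.N h) :=
  have h := hardy_product_theorem_general X.toQBFS Y.toQBFS hprod
  ⟨fun f _ ↦ h.1 f, fun f _ ↦ h.2 f⟩

end
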